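/- Let R be a local Cohen–Macaulay ring and let I be an R-ideal. Suppose that I satisfies condition G_s and is weakly (s−2)-residually S₂ for some integer s. Let K = 𝔞 : I be an s-residual intersection of I with 𝔞 ⊆ I and μ(𝔞) ≤ s. Then 𝔞/K𝔞 is a free R/K-module of rank s. -/

import Mathlib

open IsLocalRing

universe u v

namespace CPU

section Defs

variable {R : Type u} [CommRing R]

/-- The minimal number of generators of a submodule, as an extended natural number. -/
noncomputable def muE {M : Type v} [AddCommGroup M] [Module R M] (N : Submodule R M) : ℕ∞ :=
  sInf {n : ℕ∞ | ∃ s : Finset M, (s.card : ℕ∞) = n ∧ Submodule.span R (s : Set M) = N}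

/-- The Krull dimension of a ring, valued in `WithBot ℕ∞`. -/
noncomputable def rDim (S : Type v) [CommRing S] : WithBot ℕ∞ :=
  ringKrullDim S

/-- `J` is a reduction of `I`. -/
def IsReduction (J I : Ideal R) : Prop :=
  J ≤ I ∧ ∃ r : ℕ, I ^ (r + 1) = J * I ^ r

/-- `J` is a minimal reduction of `I`. -/
def IsMinimalReduction (J I : Ideal R) : Prop :=
  IsReduction J I ∧ ∀ J' : Ideal R, IsReduction J' I → J' ≤ J → J' = J

/-- The core of an ideal: the intersection of all of its minimal reductions. -/
noncomputable def core (I : Ideal R) : Ideal R :=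
  sInf {J : Ideal R | IsMinimalReduction J I}

/-- The reduction number of `I`. -/
noncomputable def reductionNumber (I : Ideal R) : ℕ∞ :=
  sInf {n : ℕ∞ | ∃ r : ℕ, (r : ℕ∞) = n ∧ ∃ J : Ideal R,
    IsMinimalReduction J I ∧ I ^ (r + 1) = J * I ^ r}

/-- `γ(I)`: the least number of minimal reductions whose intersection is the core. -/
noncomputable def gamma (I : Ideal R) : ℕ∞ :=
  sInf {n : ℕ∞ | ∃ t : ℕ, (t : ℕ∞) = n ∧ ∃ Js : Fin t → Ideal R,
    (∀ i, IsMinimalReduction (Js i) I) ∧ core I = ⨅ i, Js i}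

/-- The height of an ideal. -/
noncomputable def ht (I : Ideal R) : WithBot ℕ∞ :=
  ⨅ (p : PrimeSpectrum R) (_ : I ≤ p.asIdeal),
    rDim (Localization.AtPrime p.asIdeal)

/-- The Krull dimension of the special fiber ring of `I`,
i.e. the analytic spread of `I`. -/
noncomputable def fiberDim [IsLocalRing R] (I : Ideal R) : WithBot ℕ∞ :=
  rDim (↥(reesAlgebra I) ⧸
    (Ideal.map (algebraMap R ↥(reesAlgebra I)) (maximalIdeal R)))

/-- The condition `G_s`. -/
def Gcond (I : Ideal R) (s : ℕ) : Prop :=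
  ∀ p : PrimeSpectrum R, I ≤ p.asIdeal →
    rDim (Localization.AtPrime p.asIdeal) < (s : WithBot ℕ∞) →
    (muE (Ideal.map (algebraMap R (Localization.AtPrime p.asIdeal)) I) : WithBot ℕ∞) ≤
      rDim (Localization.AtPrime p.asIdeal)

/-- Depth of a module over a local ring, via lengths of regular sequences in the
maximal ideal. -/
noncomputable def mDepth (R : Type u) [CommRing R] [IsLocalRing R]
    (M : Type v) [AddCommGroup M] [Module R M] : ℕ∞ :=
  sSup {n : ℕ∞ | ∃ rs : List R, (∀ x ∈ rs, x ∈ maximalIdeal R) ∧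
    RingTheory.Sequence.IsRegular M rs ∧ (rs.length : ℕ∞) = n}

/-- Depth of the quotient `R/K` of a local ring `R`. -/
noncomputable def qDepth (R : Type u) [CommRing R] [IsLocalRing R] (K : Ideal R) : ℕ∞ :=
  mDepth R (R ⧸ K)

/-- The socle of `R/K`, for `R` local. -/
noncomputable def socle (R : Type u) [CommRing R] [IsLocalRing R] (K : Ideal R) :
    Ideal (R ⧸ K) :=
  Submodule.colon (⊥ : Ideal (R ⧸ K)) (Ideal.map (Ideal.Quotient.mk K) (maximalIdeal R))

/-- The Cohen–Macaulay type of the quotient `R/K` of a local ring `R`. -/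
noncomputable def qType (R : Type u) [CommRing R] [IsLocalRing R] (K : Ideal R) : ℕ∞ :=
  sInf {n : ℕ∞ | ∃ rs : List R, (∀ x ∈ rs, x ∈ maximalIdeal R) ∧
    RingTheory.Sequence.IsRegular (R ⧸ K) rs ∧ (rs.length : ℕ∞) = qDepth R K ∧
    muE (socle R (K ⊔ Ideal.ofList rs)) = n}

/-- Cohen–Macaulayness for a quotient `R/K` of a local ring `R`. -/
def IsCMQuot (R : Type u) [CommRing R] [IsLocalRing R] (K : Ideal R) : Prop :=
  rDim (R ⧸ K) = (qDepth R K : WithBot ℕ∞)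

/-- A Cohen–Macaulay local ring: depth equals Krull dimension. -/
def IsCMLocalRing (R : Type u) [CommRing R] [IsLocalRing R] : Prop :=
  rDim R = (qDepth R (⊥ : Ideal R) : WithBot ℕ∞)

/-- A Gorenstein local ring: Cohen–Macaulay of type one. -/
def IsGorensteinLocalRing (R : Type u) [CommRing R] [IsLocalRing R] : Prop :=
  IsCMLocalRing R ∧ qType R (⊥ : Ideal R) = 1

/-- Gorensteinness of the quotient ring `R/K` of a local ring. -/
def IsGorQuot (R : Type u) [CommRing R] [IsLocalRing R] (K : Ideal R) : Prop :=
  IsCMQuot R K ∧ qType R K = 1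

/-- A regular local ring: the maximal ideal is generated by `dim R` elements. -/
def IsRegularLocal (R : Type u) [CommRing R] [IsLocalRing R] : Prop :=
  IsNoetherianRing R ∧ (muE (maximalIdeal R) : WithBot ℕ∞) = rDim R

/-- Serre's condition `S₂` for the quotient ring `R/K`. -/
def QuotS2 (K : Ideal R) : Prop :=
  ∀ (q : Ideal R) (hq : q.IsPrime), K ≤ q →
    letI := hq
    min 2 (rDim ((Localization.AtPrime q) ⧸
        (Ideal.map (algebraMap R (Localization.AtPrime q)) K)))
      ≤ (qDepth (Localization.AtPrime q)
          (Ideal.map (algebraMap R (Localization.AtPrime q)) K) : WithBot ℕ∞)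

/-- `K` is an `s`-residual intersection of `I`. -/
def IsResidualIntersection (I K : Ideal R) (s : ℕ) : Prop :=
  K ≠ ⊤ ∧ ht I ≤ (s : WithBot ℕ∞) ∧ (s : WithBot ℕ∞) ≤ ht K ∧
    ∃ a : Ideal R, a ≤ I ∧ (∃ f : Finset R, f.card ≤ s ∧ Ideal.span (f : Set R) = a) ∧
      K = Submodule.colon a I

/-- `K` is a geometric `s`-residual intersection of `I`. -/
def IsGeometricRI (I K : Ideal R) (s : ℕ) : Prop :=
  IsResidualIntersection I K s ∧ (s : WithBot ℕ∞) + 1 ≤ ht (I ⊔ K)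

/-- `I` is weakly `s`-residually `S₂`. -/
def WeaklyResS2 (I : Ideal R) (s : ℕ) : Prop :=
  ∀ i ≤ s, ∀ K : Ideal R, IsGeometricRI I K i → QuotS2 K

/-- The condition `AN_s` for `I`. -/
def ANcond [IsLocalRing R] (I : Ideal R) (s : ℕ) : Prop :=
  ∀ i ≤ s, ∀ K : Ideal R, IsResidualIntersection I K i → IsCMQuot R K

/-- The condition `AN_s⁻` for `I`. -/
def ANminus [IsLocalRing R] (I : Ideal R) (s : ℕ) : Prop :=
  ∀ i ≤ s, ∀ K : Ideal R, IsGeometricRI I K i → IsCMQuot R K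

/-- `I` is universally weakly `s`-residually `S₂`: for every finite set of
variables, the extension of `I` to `R(x₁, …, x_n)` is weakly `s`-residually `S₂`. -/
def UnivWeaklyResS2 [IsLocalRing R] (I : Ideal R) (s : ℕ) : Prop :=
  ∀ (n : ℕ)
    (hP : (Ideal.map (MvPolynomial.C (σ := Fin n)) (maximalIdeal R)).IsPrime),
    letI := hP
    WeaklyResS2 (Ideal.map
      ((algebraMap (MvPolynomial (Fin n) R)
        (Localization.AtPrime
          (Ideal.map (MvPolynomial.C (σ := Fin n)) (maximalIdeal R)))).comp
        (MvPolynomial.C)) I) s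

/-- The `j`-th Fitting ideal of (the module) `I`. -/
noncomputable def fittingIdeal (I : Ideal R) (j : ℕ) : Ideal R :=
  ⨆ (n : ℕ) (π : (Fin n → R) →ₗ[R] R) (_ : LinearMap.range π = I),
    Ideal.span {d : R | ∃ (v : Fin (n - j) → (Fin n → R)) (r : Fin (n - j) → Fin n),
      (∀ k, π (v k) = 0) ∧ d = Matrix.det (Matrix.of fun i k => v k (r i))}

/-- The set `Q(I)` of primes containing `Fitt_ℓ(I)` at which `R` has dimension `ℓ`
and `I` has analytic spread `ℓ`. -/
def QSet [IsLocalRing R] (I : Ideal R) (l : ℕ) : Set (PrimeSpectrum R) :=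
  {p | fittingIdeal I l ≤ p.asIdeal ∧
    rDim (Localization.AtPrime p.asIdeal) = (l : WithBot ℕ∞) ∧
    fiberDim (Ideal.map (algebraMap R (Localization.AtPrime p.asIdeal)) I)
      = (l : WithBot ℕ∞)}

/-- An ideal is integrally closed if it admits no larger ideal of which it is a
reduction. -/
def IsIntClosedIdeal (I : Ideal R) : Prop :=
  ∀ J : Ideal R, IsReduction I J → J = I

/-- A normal ideal: all powers are integrally closed. -/
def IsNormalIdeal (I : Ideal R) : Prop :=
  ∀ j : ℕ, IsIntClosedIdeal (I ^ j)

/-- `φ` is a presentation matrix of the ideal `I` (with `n = μ(I)` rows). -/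
def Presents {n m : ℕ} (φ : Matrix (Fin n) (Fin m) R) (I : Ideal R) : Prop :=
  muE I = (n : ℕ∞) ∧ ∃ π : (Fin n → R) →ₗ[R] R, LinearMap.range π = I ∧
    LinearMap.range (Matrix.toLin' φ) = LinearMap.ker π

/-- The ideal of `t × t` minors of a matrix. -/
noncomputable def minorsIdeal {n m : ℕ} (t : ℕ) (φ : Matrix (Fin n) (Fin m) R) : Ideal R :=
  Ideal.span {d : R | ∃ (r : Fin t → Fin n) (c : Fin t → Fin m),
    d = (φ.submatrix r c).det}

/-- The grade of an ideal: the supremum of lengths of regular sequences contained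
in it. -/
noncomputable def grade (I : Ideal R) : ℕ∞ :=
  sSup {n : ℕ∞ | ∃ rs : List R, (∀ x ∈ rs, x ∈ I) ∧
    RingTheory.Sequence.IsRegular R rs ∧ (rs.length : ℕ∞) = n}

end Defs

/-- `M` has projective dimension at most `n` over `R`. -/
def ProjDimLE (R : Type u) [CommRing R] :
    (n : ℕ) → (M : Type u) → [AddCommGroup M] → [Module R M] → Prop
  | 0, M, _, _ => Module.Projective R M
  | n + 1, M, _, _ => ∃ (k : ℕ) (f : (Fin k → R) →ₗ[R] M), Function.Surjective f ∧
      ProjDimLE R n ↥(LinearMap.ker f)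

section Defs2

variable {R : Type u} [CommRing R]

/-- `M` has projective dimension exactly `n` over `R`. -/
def ProjDimEq (R : Type u) [CommRing R] (M : Type u) [AddCommGroup M] [Module R M]
    (n : ℕ) : Prop :=
  ProjDimLE R n M ∧ ∀ m : ℕ, ProjDimLE R m M → n ≤ m

/-- A perfect ideal: the projective dimension of `R/I` equals the grade of `I`. -/
def IsPerfectIdeal (I : Ideal R) : Prop :=
  ∃ g : ℕ, grade I = (g : ℕ∞) ∧ ProjDimEq R (R ⧸ I) g

/-- The multiplicative set which is the complement of the union of the associated
primes of `R/H`. -/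
def assComplement (H : Ideal R) : Submonoid R where
  carrier := {r : R | ∀ p ∈ associatedPrimes R (R ⧸ H), r ∉ p}
  one_mem' := fun p hp => (Ideal.ne_top_iff_one p).mp hp.1.ne_top
  mul_mem' := fun {a b} ha hb p hp hab =>
    (hp.1.mem_or_mem hab).elim (ha p hp) (hb p hp)

/-- The `j`-th symbolic power of `H`. -/
noncomputable def symbolicPower (H : Ideal R) (j : ℕ) : Ideal R :=
  Ideal.comap (algebraMap R (Localization (assComplement H)))
    (Ideal.map (algebraMap R (Localization (assComplement H))) (H ^ j))

/-- Serre's condition `S₂` for a module. -/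
def ModuleS2 (S : Type u) [CommRing S] (M : Type v) [AddCommGroup M] [Module S M] : Prop :=
  ∀ (q : Ideal S) (hq : q.IsPrime),
    letI := hq
    min 2 (rDim ((Localization.AtPrime q) ⧸
        (Module.annihilator (Localization.AtPrime q) (LocalizedModule q.primeCompl M))))
      ≤ (mDepth (Localization.AtPrime q) (LocalizedModule q.primeCompl M) : WithBot ℕ∞)

/-- `M` is a maximal Cohen–Macaulay `S`-module. -/
def IsMCM (S : Type u) [CommRing S] (M : Type v) [AddCommGroup M] [Module S M] : Prop :=
  ∀ (q : Ideal S) (hq : q.IsMaximal),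
    letI := hq.isPrime
    (mDepth (Localization.AtPrime q) (LocalizedModule q.primeCompl M) : WithBot ℕ∞) =
      rDim (Localization.AtPrime q)

end Defs2


section Part1

variable {R : Type u} [CommRing R]

/-- `x` is a nonzerodivisor modulo `N`. -/
def Rg (N : Ideal R) (x : R) : Prop := ∀ y, x * y ∈ N → y ∈ N

/-- `p` is an associated prime of `R/N`. -/
def As (p N : Ideal R) : Prop := p.IsPrime ∧ ∃ y, p = N.colon {y}

lemma mem_col {N : Ideal R} {y r : R} : r ∈ N.colon {y} ↔ r * y ∈ N := by
  rw [Submodule.mem_colon_singleton, smul_eq_mul]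

lemma mem_colI {N I : Ideal R} {r : R} : r ∈ N.colon (I : Set R) ↔ ∀ y ∈ I, r * y ∈ N := by
  rw [Submodule.mem_colon]; rfl

lemma exists_as [IsNoetherianRing R] (N : Ideal R) (z : R) (hz : z ∉ N) :
    ∃ t, (N.colon {t * z}).IsPrime ∧ N.colon {z} ≤ N.colon {t * z} := by
  obtain ⟨P, ⟨⟨t, rfl⟩, h₁⟩, h₃⟩ :=
    set_has_maximal_iff_noetherian.mpr (inferInstance : IsNoetherian R R)
      { P : Ideal R | (∃ t : R, P = N.colon {t * z}) ∧ P ≠ ⊤ }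
      ⟨N.colon {z}, ⟨1, by simp⟩, by
        rw [Ne, Ideal.eq_top_iff_one, mem_col, one_mul]; exact hz⟩
  refine ⟨t, ⟨h₁, ?_⟩, fun r hr => ?_⟩
  · intro a b hab
    rw [or_iff_not_imp_left]
    intro ha
    have H : N.colon {t * z} ≤ N.colon {(a * t) * z} := by
      intro c hc
      rw [mem_col] at hc ⊢
      have := N.mul_mem_left a hc
      convert this using 1; ring
    have hne : N.colon {(a * t) * z} ≠ ⊤ := by
      rw [Ne, Ideal.eq_top_iff_one, mem_col, one_mul]
      intro h; apply ha; rw [mem_col]; convert h using 1; ring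
    have := H.eq_of_not_lt (h₃ _ ⟨⟨_, rfl⟩, hne⟩)
    rw [this, mem_col]
    rw [mem_col] at hab
    convert hab using 1; ring
  · rw [mem_col] at hr ⊢
    have := N.mul_mem_left t hr
    convert this using 1; ring

lemma as_finite [IsNoetherianRing R] (N : Ideal R) : {p | As p N}.Finite := by
  refine (associatedPrimes.finite R (R ⧸ N)).subset ?_
  rintro p ⟨hp, y, hy⟩
  change IsAssociatedPrime p (R ⧸ N)
  rw [isAssociatedPrime_iff]
  refine ⟨hp, Ideal.Quotient.mk N y, ?_⟩
  ext r
  rw [hy, mem_col, Submodule.mem_colon_singleton, Submodule.mem_bot, ← Ideal.Quotient.eq_zero_iff_mem,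
    map_mul]
  rfl

lemma rg_of_not_as [IsNoetherianRing R] {N : Ideal R} {x : R} (h : ∀ p, As p N → x ∉ p) :
    Rg N x := by
  intro y hy
  by_contra hyN
  obtain ⟨t, ht, hle⟩ := exists_as N y hyN
  exact h _ ⟨ht, _, rfl⟩ (hle (mem_col.2 hy))

lemma As.not_mem {p N : Ideal R} (h : As p N) {x : R} (hx : Rg N x) : x ∉ p := by
  obtain ⟨hp, y, rfl⟩ := h
  intro hxp
  have := hx y (mem_col.1 hxp)
  exact hp.ne_top ((Ideal.eq_top_iff_one _).2 (mem_col.2 (by simpa using this)))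

lemma As.le {p N : Ideal R} (h : As p N) : N ≤ p := by
  obtain ⟨hp, y, rfl⟩ := h
  exact fun r hr => mem_col.2 (N.mul_mem_right _ hr)

lemma exists_rg2 [IsNoetherianRing R] (J N₁ N₂ : Ideal R) (h₁ : ∀ p, As p N₁ → ¬ J ≤ p)
    (h₂ : ∀ p, As p N₂ → ¬ J ≤ p) : ∃ z ∈ J, Rg N₁ z ∧ Rg N₂ z := by
  have hf := (as_finite N₁).union (as_finite N₂)
  have key : ¬ ((J : Set R) ⊆ ⋃ p ∈ (hf.toFinset : Set (Ideal R)), (id p : Ideal R)) := by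
    rw [Ideal.subset_union_prime (⊤ : Ideal R) ⊤]
    · rintro ⟨p, hp, hJ⟩
      rw [Set.Finite.mem_toFinset] at hp
      rcases hp with hp | hp
      · exact h₁ p hp hJ
      · exact h₂ p hp hJ
    · intro p hp _ _
      rw [Set.Finite.mem_toFinset] at hp
      rcases hp with hp | hp
      · exact hp.1
      · exact hp.1
  rw [Set.not_subset] at key
  obtain ⟨z, hz, hz'⟩ := key
  refine ⟨z, hz, rg_of_not_as fun p hp hzp => hz' ?_, rg_of_not_as fun p hp hzp => hz' ?_⟩
  · simp only [Set.mem_iUnion]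
    exact ⟨p, by simp only [Set.Finite.coe_toFinset]; exact Or.inl hp, hzp⟩
  · simp only [Set.mem_iUnion]
    exact ⟨p, by simp only [Set.Finite.coe_toFinset]; exact Or.inr hp, hzp⟩

lemma mem_sup_sp {N : Ideal R} {x y : R} : y ∈ N ⊔ Ideal.span {x} ↔ ∃ u, y - x * u ∈ N := by
  rw [Submodule.mem_sup]
  constructor
  · rintro ⟨n, hn, w, hw, rfl⟩
    obtain ⟨u, rfl⟩ := Ideal.mem_span_singleton'.1 hw
    exact ⟨u, by convert hn using 1; ring⟩
  · rintro ⟨u, hu⟩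
    exact ⟨_, hu, x * u, Ideal.mem_span_singleton'.2 ⟨u, by ring⟩, by ring⟩

/-- symmetry of depth one -/
lemma sym_lemma {L m : Ideal R} {b y₁ y₂ z : R} (hb : Rg L b) (h1 : Rg L y₁)
    (h2 : Rg (L ⊔ Ideal.span {y₁}) y₂) (hy1 : y₁ ∈ m) (hy2 : y₂ ∈ m)
    (hz : ∀ r ∈ m, r * z ∈ L ⊔ Ideal.span {b}) : z ∈ L ⊔ Ideal.span {b} := by
  obtain ⟨w, hw⟩ := mem_sup_sp.1 (hz _ hy1)
  obtain ⟨v, hv⟩ := mem_sup_sp.1 (hz _ hy2)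
  have h3 : y₂ * w - y₁ * v ∈ L := by
    apply hb
    have := L.sub_mem (L.mul_mem_left y₁ hv) (L.mul_mem_left y₂ hw)
    convert this using 1; ring
  obtain ⟨u, hu⟩ := mem_sup_sp.1 (h2 w (mem_sup_sp.2 ⟨v, h3⟩))
  refine mem_sup_sp.2 ⟨u, h1 _ ?_⟩
  have := L.add_mem hw (L.mul_mem_left b hu)
  convert this using 1; ring

lemma rg_swap {N : Ideal R} {y z : R} (hy : Rg N y) (hz : Rg (N ⊔ Ideal.span {y}) z) :
    Rg (N ⊔ Ideal.span {z}) y := by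
  intro w hw
  obtain ⟨v, hv⟩ := mem_sup_sp.1 hw
  have : v ∈ N ⊔ Ideal.span {y} := hz v (mem_sup_sp.2 ⟨w, by
    have := N.neg_mem hv
    convert this using 1; ring⟩)
  obtain ⟨u, hu⟩ := mem_sup_sp.1 this
  refine mem_sup_sp.2 ⟨u, hy _ ?_⟩
  have := N.add_mem hv (N.mul_mem_left z hu)
  convert this using 1; ring

/-- `R/N` has a regular sequence of length `n` inside `m`. -/
def Dp (m : Ideal R) : ℕ → Ideal R → Prop
  | 0, _ => True
  | n + 1, N => ∃ x ∈ m, Rg N x ∧ Dp m n (N ⊔ Ideal.span {x})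

lemma dp_exchange [IsNoetherianRing R] [IsLocalRing R] (n : ℕ) : ∀ (N : Ideal R) (x : R),
    x ∈ maximalIdeal R → Rg N x → Dp (maximalIdeal R) (n + 1) N →
    Dp (maximalIdeal R) n (N ⊔ Ideal.span {x}) := by
  induction n with
  | zero => intros; trivial
  | succ n ih =>
    intro N x hxm hx hD
    obtain ⟨y₁, hy₁m, hy₁, hD1⟩ := hD
    obtain ⟨y₂, hy₂m, hy₂, hD2⟩ := id hD1
    obtain ⟨z, hzm, hz1, hz2⟩ := exists_rg2 (maximalIdeal R) (N ⊔ Ideal.span {x})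
      (N ⊔ Ideal.span {y₁}) (by
        rintro p ⟨hp, y, rfl⟩ hle
        have := sym_lemma hx hy₁ hy₂ hy₁m hy₂m (z := y) fun r hr => mem_col.1 (hle hr)
        exact hp.ne_top ((Ideal.eq_top_iff_one _).2 (mem_col.2 (by simpa using this))))
      (fun p hp hle => hp.not_mem hy₂ (hle hy₂m))
    have e1 := ih _ z hzm hz2 hD1
    have r1 := rg_swap hy₁ hz2
    have r2 := rg_swap hx hz1
    have e2 : Dp (maximalIdeal R) (n + 1) (N ⊔ Ideal.span {z}) :=
      ⟨y₁, hy₁m, r1, by rw [sup_right_comm]; exact e1⟩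
    have e3 := ih _ x hxm r2 e2
    exact ⟨z, hzm, hz1, by rw [sup_right_comm]; exact e3⟩

lemma as_of_minimal_colon [IsNoetherianRing R] {p N : Ideal R} {u : R}
    (hp : p ∈ (N.colon {u}).minimalPrimes) : As p N :=
  ⟨hp.1.1, Submodule.exists_eq_colon_of_mem_minimalPrimes hp⟩

lemma as_of_minimal [IsNoetherianRing R] {p N : Ideal R} (hp : p ∈ N.minimalPrimes) : As p N := by
  apply as_of_minimal_colon (u := 1)
  have : N.colon {(1 : R)} = N := by ext r; rw [mem_col, mul_one]
  rwa [this]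

/-- Nakayama's lemma at a prime `p`, with denominators cleared. -/
lemma nak_prime [IsNoetherianRing R] (A N p J : Ideal R) [hpp : p.IsPrime] (hJ : J ≤ p) (t : R)
    (htp : t ∉ p) (h : ∀ u ∈ A, t * u ∈ N ⊔ J * A) : ∃ t', t' ∉ p ∧ ∀ u ∈ A, t' * u ∈ N := by
  have hfg : (Submodule.map N.mkQ A).FG :=
    Submodule.FG.map _ ((inferInstance : IsNoetherianRing R).noetherian _)
  set V := Submodule.map N.mkQ A with hV
  have hfin : Module.Finite R V := Module.Finite.iff_fg.2 hfg
  have hf : LinearMap.range (algebraMap R (Module.End R V) t) ≤ J • (⊤ : Submodule R V) := by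
    rintro _ ⟨⟨_, u, hu, rfl⟩, rfl⟩
    have e : (J • (⊤ : Submodule R V)).map V.subtype = J • V := by
      rw [Submodule.map_smul'', Submodule.map_top, Submodule.range_subtype]
    have e2 : t • N.mkQ u ∈ J • V := by
      rw [hV, ← Submodule.map_smul'']
      obtain ⟨n, hn, w, hw, hnw⟩ := Submodule.mem_sup.1 (h u hu)
      refine ⟨w, hw, ?_⟩
      rw [← map_smul, smul_eq_mul, ← hnw, map_add]
      have : N.mkQ n = 0 := by rw [Submodule.mkQ_apply, Submodule.Quotient.mk_eq_zero]; exact hn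
      rw [this, zero_add]
    rw [← e] at e2
    obtain ⟨w', hw', hw''⟩ := e2
    rw [Module.algebraMap_end_apply]
    have : t • (⟨N.mkQ u, u, hu, rfl⟩ : V) = w' := Subtype.ext hw''.symm
    rw [this]; exact hw'
  obtain ⟨P, hPm, hPd, hPc, hP⟩ :=
    LinearMap.exists_monic_and_natDegree_eq_and_coeff_mem_pow_and_aeval_eq_zero R _ _ hf
  refine ⟨P.eval t, ?_, ?_⟩
  · intro hmem
    have : P.eval t - t ^ P.natDegree ∈ p := by
      rw [Polynomial.eval_eq_sum_range, Finset.sum_range_succ, hPm.coeff_natDegree, one_mul,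
        add_sub_cancel_right]
      refine p.sum_mem fun i hi => p.mul_mem_right _ ?_
      rw [Finset.mem_range] at hi
      exact (Ideal.pow_le_self (by omega)).trans hJ (hPc i)
    have := p.sub_mem hmem this
    rw [sub_sub_cancel] at this
    exact htp (hpp.mem_of_pow_mem _ this)
  · intro u hu
    rw [Polynomial.aeval_algebraMap_apply] at hP
    have := congrArg (fun g : Module.End R V => ((g ⟨N.mkQ u, u, hu, rfl⟩ : V) : R ⧸ N)) hP
    simp only [Module.algebraMap_end_apply] at this
    rw [← Submodule.Quotient.mk_eq_zero, ← smul_eq_mul, Submodule.Quotient.mk_smul]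
    simpa using this

/-- If `x` is regular mod `N`, `q` associated to `N`, any prime minimal over `q + (x)` is
associated to `N + (x)`. -/
lemma as_step [IsNoetherianRing R] {N q p : Ideal R} {x : R} (hx : Rg N x) (hq : As q N)
    (hp : p ∈ (q ⊔ Ideal.span {x}).minimalPrimes) : As p (N ⊔ Ideal.span {x}) := by
  have hpp : p.IsPrime := hp.1.1
  have hqp : q ≤ p := le_sup_left.trans hp.1.2
  have hxp : x ∈ p := hp.1.2 (Ideal.mem_sup_right (Ideal.mem_span_singleton_self x))
  obtain ⟨hqpr, y, hy⟩ := hq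
  obtain ⟨S, hS⟩ := (inferInstance : IsNoetherianRing R).noetherian (N.colon (q : Set R))
  set N' := N ⊔ Ideal.span {x} with hN'
  have hSmem : ∀ u ∈ S, ∀ r ∈ q, r * u ∈ N := by
    intro u hu r hr
    have : u ∈ N.colon (q : Set R) := hS ▸ Submodule.subset_span hu
    rw [mul_comm]
    exact mem_colI.1 this r hr
  have key : ∃ u ∈ S, N'.colon {u} ≤ p := by
    by_contra hcon
    push Not at hcon
    have : ¬ S.inf (fun u => N'.colon {u}) ≤ p := by
      rw [hpp.inf_le']
      push Not
      exact hcon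
    obtain ⟨t, ht, htp⟩ := SetLike.not_le_iff_exists.1 this
    have h1 : ∀ u ∈ N.colon (q : Set R), t * u ∈ N' := by
      intro u hu
      rw [← hS] at hu
      induction hu using Submodule.span_induction with
      | mem u hu =>
        have := (Finset.inf_le hu : S.inf (fun u => N'.colon {u}) ≤ _) ht
        exact mem_col.1 this
      | zero => simp
      | add a b _ _ ha hb => rw [mul_add]; exact N'.add_mem ha hb
      | smul c a _ ha => 
        rw [smul_eq_mul, mul_left_comm]; exact N'.mul_mem_left _ ha
    have h2 : ∀ u ∈ N.colon (q : Set R), ∃ v ∈ N.colon (q : Set R), t * u - x * v ∈ N := by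
      intro u hu
      obtain ⟨v, hv⟩ := mem_sup_sp.1 (h1 u hu)
      refine ⟨v, mem_colI.2 fun r hr => hx _ ?_, hv⟩
      have a1 := N.mul_mem_left t (mem_colI.1 hu r hr)
      have a2 := N.mul_mem_left r hv
      have := N.sub_mem a1 a2
      convert this using 1; ring
    obtain ⟨t', ht', h5⟩ := nak_prime (N.colon (q : Set R)) N p (Ideal.span {x})
      (by rw [Ideal.span_singleton_le_iff_mem]; exact hxp) t htp (fun u hu => by
        obtain ⟨v, hv, hv'⟩ := h2 u hu
        have e : t * u = (t * u - x * v) + x * v := by ring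
        rw [e]
        exact Submodule.add_mem_sup hv' (Ideal.mul_mem_mul (Ideal.mem_span_singleton_self x) hv))
    apply ht'
    apply hqp
    rw [hy, mem_col]
    exact h5 y (mem_colI.2 fun r hr => by
      rw [hy, mem_col] at hr; rw [mul_comm]; exact hr)
  obtain ⟨u, hu, hup⟩ := key
  refine as_of_minimal_colon (u := u) ⟨⟨hpp, hup⟩, ?_⟩
  rintro p' ⟨hp', hle⟩ hp'p
  refine hp.2 ⟨hp', sup_le ?_ ?_⟩ hp'p
  · exact fun r hr => hle (mem_col.2 (Ideal.mem_sup_left (hSmem u hu r hr)))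
  · rw [Ideal.span_singleton_le_iff_mem]
    exact hle (mem_col.2 (Ideal.mem_sup_right (Ideal.mul_mem_right _ _ (Ideal.mem_span_singleton_self x))))

end Part1
section Part2

variable {R : Type u} [CommRing R]

lemma isSMulRegular_quot {N : Ideal R} {x : R} (h : IsSMulRegular (R ⧸ N) x) : Rg N x := by
  intro y hy
  rw [← Ideal.Quotient.eq_zero_iff_mem] at hy ⊢
  apply h
  simp only [smul_zero]
  rw [map_mul] at hy
  exact hy

noncomputable def quotSMulTopEquiv (N : Ideal R) (x : R) :
    QuotSMulTop x (R ⧸ N) ≃ₗ[R] R ⧸ (N ⊔ Ideal.span {x}) :=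
  (Submodule.quotEquivOfEq _ _ (by
    ext y
    obtain ⟨y, rfl⟩ := Submodule.Quotient.mk_surjective _ y
    constructor
    · rintro ⟨w, _, hw⟩
      obtain ⟨w, rfl⟩ := Submodule.Quotient.mk_surjective _ w
      refine ⟨x * w, Ideal.mul_mem_right _ _ (Ideal.mem_span_singleton_self x), hw⟩
    · rintro ⟨w, hw, hw'⟩
      obtain ⟨u, rfl⟩ := Ideal.mem_span_singleton'.1 hw
      refine ⟨Submodule.Quotient.mk u, trivial, ?_⟩
      rw [← hw', mul_comm]
      rfl)).trans
    (Submodule.quotientQuotientEquivQuotientSup N (Ideal.span {x}))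

lemma dp_of_list (m : Ideal R) (rs : List R) : ∀ (N : Ideal R), (∀ x ∈ rs, x ∈ m) →
    RingTheory.Sequence.IsWeaklyRegular (R ⧸ N) rs → Dp m rs.length N := by
  induction rs with
  | nil => intros; trivial
  | cons r rs ih =>
    intro N hm h
    rw [RingTheory.Sequence.isWeaklyRegular_cons_iff] at h
    exact ⟨r, hm r (by simp), isSMulRegular_quot h.1, ih _ (fun x hx => hm x (by simp [hx]))
      (((quotSMulTopEquiv N r).isWeaklyRegular_congr rs).1 h.2)⟩

lemma dp_mono {m : Ideal R} {k n : ℕ} (hk : k ≤ n) : ∀ {N : Ideal R}, Dp m n N → Dp m k N := by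
  induction k generalizing n with
  | zero => intros; trivial
  | succ k ih =>
    intro N h
    obtain ⟨n, rfl⟩ : ∃ n', n = n' + 1 := ⟨n - 1, by omega⟩
    obtain ⟨x, hx, hr, hD⟩ := h
    exact ⟨x, hx, hr, ih (by omega) hD⟩

lemma dp_of_depth [IsLocalRing R] {N : Ideal R} {k : ℕ} (h : (k : ℕ∞) ≤ qDepth R N) :
    Dp (maximalIdeal R) k N := by
  cases k with
  | zero => trivial
  | succ k =>
    have h1 : (k : ℕ∞) < qDepth R N := lt_of_lt_of_le (by exact_mod_cast Nat.lt_succ_self k) h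
    unfold qDepth mDepth at h1
    rw [lt_sSup_iff] at h1
    obtain ⟨_, ⟨rs, hm, hreg, rfl⟩, hlt⟩ := h1
    have : k < rs.length := by exact_mod_cast hlt
    exact dp_mono this (dp_of_list _ rs N hm hreg.toIsWeaklyRegular)

variable [IsNoetherianRing R] [IsLocalRing R]

lemma dp_height (n : ℕ) : ∀ (N p : Ideal R), Dp (maximalIdeal R) n N → As p N →
    p.height + n ≤ (maximalIdeal R).height := by
  induction n with
  | zero =>
    intro N p _ hp
    simp only [Nat.cast_zero, add_zero]
    exact Ideal.height_mono (le_maximalIdeal hp.1.ne_top)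
  | succ n ih =>
    rintro N p ⟨x, hx, hr, hD⟩ hp
    have hpp := hp.1
    have hle : p ⊔ Ideal.span {x} ≤ maximalIdeal R :=
      sup_le (le_maximalIdeal hpp.ne_top) (by rwa [Ideal.span_singleton_le_iff_mem])
    obtain ⟨p', hp', _⟩ := Ideal.exists_minimalPrimes_le hle
    have has := as_step hr hp hp'
    have := has.1
    have hlt : p < p' := lt_of_le_of_ne (le_sup_left.trans hp'.1.2) (by
      rintro rfl
      exact hp.not_mem hr (hp'.1.2 (Ideal.mem_sup_right (Ideal.mem_span_singleton_self x))))
    have h1 := Ideal.height_add_one_le_of_lt_of_isPrime hlt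
    have h2 := ih _ p' hD has
    calc p.height + (n + 1 : ℕ) = (p.height + 1) + n := by push_cast; ring
      _ ≤ p'.height + n := by gcongr
      _ ≤ _ := h2

/-- `R/N` is Cohen-Macaulay of codimension `j` -/
def Good (j : ℕ) (N : Ideal R) : Prop :=
  (∃ n : ℕ, (n + j : ℕ) = (maximalIdeal R).height ∧ Dp (maximalIdeal R) n N) ∧
    ∀ p : Ideal R, p.IsPrime → N ≤ p → (j : ℕ∞) ≤ p.height

lemma good_as {j : ℕ} {N p : Ideal R} (h : Good j N) (hp : As p N) : p.height = j := by
  obtain ⟨⟨n, hn, hD⟩, hh⟩ := h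
  have h1 := dp_height n N p hD hp
  have h2 := hh p hp.1 hp.le
  rw [← hn] at h1
  refine le_antisymm ?_ h2
  push_cast at h1
  rw [add_comm] at h1
  exact (ENat.add_le_add_iff_left (ENat.natCast_ne_top n)).1 h1

lemma good_step {j : ℕ} {N : Ideal R} {x : R} (h : Good j N) (hN : N ≤ maximalIdeal R)
    (hx : x ∈ maximalIdeal R) (hr : Rg N x) : Good (j + 1) (N ⊔ Ideal.span {x}) := by
  have hh : ∀ p : Ideal R, p.IsPrime → N ⊔ Ideal.span {x} ≤ p → ((j + 1 : ℕ) : ℕ∞) ≤ p.height := by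
    intro p hp hle
    obtain ⟨q, hq, hqp⟩ := Ideal.exists_minimalPrimes_le (le_sup_left.trans hle)
    have hqa := as_of_minimal hq
    have := hqa.1
    have hlt : q < p := lt_of_le_of_ne hqp (by
      rintro rfl
      exact hqa.not_mem hr (hle (Ideal.mem_sup_right (Ideal.mem_span_singleton_self x))))
    have h1 := Ideal.height_add_one_le_of_lt_of_isPrime hlt
    rw [good_as h hqa] at h1
    exact_mod_cast h1
  obtain ⟨⟨n, hn, hD⟩, -⟩ := h
  have := hh (maximalIdeal R) inferInstance
    (sup_le hN (by rwa [Ideal.span_singleton_le_iff_mem]))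
  rw [← hn] at this
  have hle : j + 1 ≤ n + j := by exact_mod_cast this
  obtain ⟨n, rfl⟩ : ∃ n', n = n' + 1 := ⟨n - 1, by omega⟩
  exact ⟨⟨n, by rw [← hn]; congr 1; ring, dp_exchange n N x hx hr hD⟩, hh⟩

lemma good_bot (hCM : IsCMLocalRing R) : Good 0 (⊥ : Ideal R) := by
  refine ⟨?_, by simp⟩
  have hfin : (maximalIdeal R).height ≠ ⊤ := Ideal.height_ne_top_of_isPrime
  obtain ⟨d, hd⟩ := WithTop.ne_top_iff_exists.1 hfin
  refine ⟨d, hd, dp_of_depth ?_⟩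
  unfold IsCMLocalRing rDim at hCM
  rw [← IsLocalRing.maximalIdeal_height_eq_ringKrullDim] at hCM
  have := WithBot.coe_injective hCM
  rw [← this, ← hd]
  exact le_rfl

lemma exists_good (hCM : IsCMLocalRing R) (q : Ideal R) [hq : q.IsPrime] (j : ℕ) :
    (j : ℕ∞) ≤ q.height → ∃ N ≤ q, Good j N := by
  induction j with
  | zero => intro _; exact ⟨⊥, bot_le, good_bot hCM⟩
  | succ j ih =>
    intro h
    have hlt : (j : ℕ∞) < q.height := lt_of_lt_of_le (by exact_mod_cast Nat.lt_succ_self j) h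
    obtain ⟨N, hNq, hN⟩ := ih hlt.le
    have key : ∀ p, As p N → ¬ q ≤ p := by
      intro p hp hqp
      have := Ideal.height_mono hqp
      rw [good_as hN hp] at this
      exact absurd hlt (not_lt.2 this)
    obtain ⟨x, hxq, hx, _⟩ := exists_rg2 q N N key key
    have hqm := le_maximalIdeal hq.ne_top
    exact ⟨N ⊔ Ideal.span {x}, sup_le hNq (by rwa [Ideal.span_singleton_le_iff_mem]),
      good_step hN (hNq.trans hqm) (hqm hxq) hx⟩

/-- catenarity -/
lemma cat_lemma (hCM : IsCMLocalRing R) (q p : Ideal R) [hq : q.IsPrime] [hp : p.IsPrime]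
    (hqp : q < p) (hadj : ∀ q' : Ideal R, q'.IsPrime → q < q' → q' ≤ p → q' = p) :
    p.height ≤ q.height + 1 := by
  have hfin : q.height ≠ ⊤ := Ideal.height_ne_top_of_isPrime
  obtain ⟨j, hj⟩ := WithTop.ne_top_iff_exists.1 hfin
  have hj' : q.height = (j : ℕ∞) := hj.symm
  obtain ⟨N, hNq, hN⟩ := exists_good hCM q j hj'.ge
  have hqN : As q N := by
    obtain ⟨q', hq', hle⟩ := Ideal.exists_minimalPrimes_le hNq
    have := hq'.1.1
    have h1 := good_as hN (as_of_minimal hq')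
    rcases hle.eq_or_lt with rfl | hlt
    · exact as_of_minimal hq'
    · have := Ideal.height_strict_mono_of_isPrime_of_isPrime hlt
      rw [h1, hj'] at this
      exact absurd this (lt_irrefl _)
  by_cases hpj : p.height ≤ j
  · rw [hj']; exact hpj.trans le_self_add
  have key : ∀ p', As p' N → ¬ p ≤ p' := by
    intro p' hp' hpp'
    have := Ideal.height_mono hpp'
    rw [good_as hN hp'] at this
    exact hpj this
  obtain ⟨x, hxp, hx, _⟩ := exists_rg2 p N N key key
  have hpm := le_maximalIdeal hp.ne_top
  have hG := good_step hN (hNq.trans (hqp.le.trans hpm)) (hpm hxp) hx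
  have hmin : p ∈ (q ⊔ Ideal.span {x}).minimalPrimes := by
    refine ⟨⟨hp, sup_le hqp.le (by rwa [Ideal.span_singleton_le_iff_mem])⟩, ?_⟩
    rintro p' ⟨hp', hle⟩ hp'p
    have hlt : q < p' := lt_of_le_of_ne (le_sup_left.trans hle) (by
      rintro rfl
      exact hqN.not_mem hx (hle (Ideal.mem_sup_right (Ideal.mem_span_singleton_self x))))
    exact (hadj p' hp' hlt hp'p).ge
  rw [good_as hG (as_step hx hqN hmin), hj']
  exact_mod_cast le_rfl

end Part2

section Part3

variable {R : Type u} [CommRing R]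

lemma unif [IsNoetherianRing R] {A M p : Ideal R} [hp : p.IsPrime]
    (h : ∀ u ∈ A, ¬ M.colon {u} ≤ p) : ¬ M.colon (A : Set R) ≤ p := by
  obtain ⟨S, hS⟩ := (inferInstance : IsNoetherianRing R).noetherian A
  have h1 : ¬ S.inf (fun u => M.colon {u}) ≤ p := by
    rw [hp.inf_le']
    push Not
    exact fun u hu => h u (hS ▸ Submodule.subset_span hu)
  obtain ⟨t, ht, htp⟩ := SetLike.not_le_iff_exists.1 h1
  intro hle
  refine htp (hle (mem_colI.2 fun u hu => ?_))
  rw [← hS] at hu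
  induction hu using Submodule.span_induction with
  | mem u hu =>
    have := (Finset.inf_le hu : S.inf (fun u => M.colon {u}) ≤ _) ht
    exact mem_col.1 this
  | zero => simp
  | add a b _ _ ha hb => rw [mul_add]; exact M.add_mem ha hb
  | smul c a _ ha =>
    rw [smul_eq_mul, mul_left_comm]; exact M.mul_mem_left _ ha

/-- `A` is generated at `p` by `k` elements modulo `N`. -/
def Gp (A p N : Ideal R) (k : ℕ) : Prop :=
  ∃ c : Fin k → R, (∀ l, c l ∈ A) ∧ ¬ (N ⊔ Ideal.span (Set.range c)).colon (A : Set R) ≤ p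

lemma colon_mono' {N N' : Ideal R} (h : N ≤ N') (S : Set R) : N.colon S ≤ N'.colon S := by
  intro x hx
  rw [Submodule.mem_colon] at hx ⊢
  exact fun y hy => h (hx y hy)

lemma Gp.monoN {A p N N' : Ideal R} {k : ℕ} (h : N ≤ N') (hG : Gp A p N k) : Gp A p N' k := by
  obtain ⟨c, hc, hn⟩ := hG
  exact ⟨c, hc, fun hle => hn ((colon_mono' (sup_le_sup_right h _) _).trans hle)⟩

lemma Gp.succ {A p N : Ideal R} {k : ℕ} (hG : Gp A p N k) : Gp A p N (k + 1) := by
  obtain ⟨c, hc, hn⟩ := hG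
  refine ⟨Fin.cons 0 c, ?_, fun hle => hn ((colon_mono' (sup_le_sup_left ?_ _) _).trans hle)⟩
  · intro l
    refine Fin.cases ?_ ?_ l
    · simp
    · intro l; simpa using hc l
  · apply Ideal.span_mono
    rintro _ ⟨l, rfl⟩
    exact ⟨l.succ, by simp⟩

lemma Gp.monoK {A p N : Ideal R} {k k' : ℕ} (h : k ≤ k') (hG : Gp A p N k) : Gp A p N k' := by
  induction h with
  | refl => exact hG
  | step _ ih => exact ih.succ

lemma gp_zero {A p N : Ideal R} : Gp A p N 0 ↔ ¬ N.colon (A : Set R) ≤ p := by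
  constructor
  · rintro ⟨c, hc, hn⟩
    have : Set.range c = ∅ := Set.range_eq_empty c
    rwa [this, Ideal.span_empty, sup_bot_eq] at hn
  · intro h
    refine ⟨Fin.elim0, fun l => l.elim0, ?_⟩
    rwa [Set.range_eq_empty, Ideal.span_empty, sup_bot_eq]

/-- bad elements at `p`. -/
def Wp (A N p : Ideal R) (z : R) : Prop := ∃ t, t ∉ p ∧ t * z ∈ N ⊔ p * A

lemma Gp.exchange {A p N : Ideal R} [hp : p.IsPrime] {k : ℕ} {z : R} (hz : z ∈ A)
    (hG : Gp A p N (k + 1)) (hW : ¬ Wp A N p z) : Gp A p (N ⊔ Ideal.span {z}) k := by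
  obtain ⟨c, hc, hn⟩ := hG
  obtain ⟨t, ht, htp⟩ := SetLike.not_le_iff_exists.1 hn
  have h1 := mem_colI.1 ht z hz
  obtain ⟨n, hnN, w, hw, hnw⟩ := Submodule.mem_sup.1 h1
  obtain ⟨u, hu⟩ := (Ideal.mem_span_range_iff_exists_fun).1 hw
  have hex : ∃ l, u l ∉ p := by
    by_contra hcon
    push Not at hcon
    refine hW ⟨t, htp, ?_⟩
    rw [← hnw]
    refine Submodule.add_mem_sup hnN ?_
    rw [← hu]
    exact Ideal.sum_mem _ fun l _ => Ideal.mul_mem_mul (hcon l) (hc l)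
  obtain ⟨l, hl⟩ := hex
  refine ⟨fun j => c (l.succAbove j), fun j => hc _, ?_⟩
  set M := N ⊔ Ideal.span {z} ⊔ Ideal.span (Set.range fun j => c (l.succAbove j)) with hM
  have hNM : N ≤ M := le_sup_left.trans le_sup_left
  have hcM : ∀ j, c (l.succAbove j) ∈ M := fun j =>
    Ideal.mem_sup_right (Ideal.subset_span ⟨j, rfl⟩)
  have hzM : z ∈ M := Ideal.mem_sup_left (Ideal.mem_sup_right (Ideal.mem_span_singleton_self z))
  have hul : u l * c l ∈ M := by
    rw [Fin.sum_univ_succAbove _ l] at hu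
    have e : u l * c l = t * z - n - ∑ i, u (l.succAbove i) * c (l.succAbove i) := by
      rw [← hnw, ← hu]; ring
    rw [e]
    exact M.sub_mem (M.sub_mem (M.mul_mem_left _ hzM) (hNM hnN))
      (Ideal.sum_mem _ fun i _ => M.mul_mem_left _ (hcM i))
  have hle : N ⊔ Ideal.span (Set.range c) ≤ M.colon {u l} := by
    refine sup_le (fun x hx => mem_col.2 (M.mul_mem_right _ (hNM hx))) (Ideal.span_le.2 ?_)
    rintro _ ⟨j, rfl⟩
    rw [SetLike.mem_coe, mem_col]
    rcases Fin.eq_self_or_eq_succAbove l j with rfl | ⟨i, rfl⟩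
    · rw [mul_comm]; exact hul
    · exact M.mul_mem_right _ (hcM i)
  intro hcon
  have : u l * t ∈ p := hcon (mem_colI.2 fun y hy => by
    have := mem_col.1 (hle (mem_colI.1 ht y hy))
    convert this using 1; ring)
  exact (hp.mem_or_mem this).elim hl htp

lemma avoid {A N m : Ideal R} (P : Finset (Ideal R)) : (∀ p ∈ P, p.IsPrime ∧ ¬ m ≤ p ∧
    ∃ y ∈ A, ¬ Wp A N p y) → ∀ a₀ ∈ A, ∃ z ∈ A, z - a₀ ∈ m * A ∧ ∀ p ∈ P, ¬ Wp A N p z := by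
  classical
  induction P using Finset.strongInduction with
  | H P ih =>
    intro h a₀ ha₀
    rcases P.eq_empty_or_nonempty with rfl | hne
    · exact ⟨a₀, ha₀, by simp, by simp⟩
    obtain ⟨p, hpP, hmin⟩ := P.exists_minimal hne
    obtain ⟨hp, hmp, y, hy, hWy⟩ := h p hpP
    obtain ⟨z, hzA, hza, hz⟩ := ih (P.erase p) (Finset.erase_ssubset hpP)
      (fun q hq => h q (Finset.mem_of_mem_erase hq)) a₀ ha₀
    by_cases hWz : Wp A N p z
    · have h1 : ¬ m * (P.erase p).inf id ≤ p := by
        intro hle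
        rcases hp.mul_le.1 hle with h2 | h2
        · exact hmp h2
        · obtain ⟨q, hq, hqp⟩ := (hp.inf_le').1 h2
          exact (Finset.ne_of_mem_erase hq)
            (le_antisymm hqp (hmin (Finset.mem_of_mem_erase hq) hqp))
      obtain ⟨r, hr, hrp⟩ := SetLike.not_le_iff_exists.1 h1
      have hrm : r ∈ m := (Ideal.mul_le_left : m * (P.erase p).inf id ≤ m) hr
      have hri : r ∈ (P.erase p).inf id := (Ideal.mul_le_right : m * (P.erase p).inf id ≤ _) hr
      refine ⟨z + r * y, A.add_mem hzA (A.mul_mem_left _ hy), ?_, ?_⟩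
      · have : z + r * y - a₀ = (z - a₀) + r * y := by ring
        rw [this]
        exact Ideal.add_mem _ hza (Ideal.mul_mem_mul hrm hy)
      · intro q hq
        by_cases hqp : q = p
        · subst hqp
          rintro ⟨t, ht, htm⟩
          obtain ⟨t', ht', htm'⟩ := hWz
          refine hWy ⟨t * t' * r, fun hc => ?_, ?_⟩
          · rcases hp.mem_or_mem hc with hc | hc
            · exact (hp.mem_or_mem hc).elim ht ht'
            · exact hrp hc
          · have := Ideal.sub_mem _ (Ideal.mul_mem_left _ t' htm) (Ideal.mul_mem_left _ t htm')
            convert this using 1; ring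
        · have hq' := Finset.mem_erase.2 ⟨hqp, hq⟩
          rintro ⟨t, ht, htm⟩
          refine hz q hq' ⟨t, ht, ?_⟩
          have hrq : r ∈ q := (Finset.inf_le hq' : (P.erase p).inf id ≤ q) hri
          have h3 : t * (r * y) ∈ N ⊔ q * A :=
            Ideal.mem_sup_right (Ideal.mul_mem_left _ _ (Ideal.mul_mem_mul hrq hy))
          have := Ideal.sub_mem _ htm h3
          convert this using 1; ring
    · refine ⟨z, hzA, hza, fun q hq => ?_⟩
      by_cases hqp : q = p
      · rwa [hqp]
      · exact hz q (Finset.mem_erase.2 ⟨hqp, hq⟩)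

/-- The numerical function controlling the number of generators. -/
noncomputable def ee (I p : Ideal R) : ℕ :=
  open Classical in if I ≤ p then p.height.toNat else p.height.toNat + 1

lemma height_toNat [IsNoetherianRing R] (p : Ideal R) [p.IsPrime] :
    (p.height.toNat : ℕ∞) = p.height :=
  ENat.natCast_toNat Ideal.height_ne_top_of_isPrime

def CC (I A N : Ideal R) (s i : ℕ) : Prop :=
  ∀ p : Ideal R, p.IsPrime → p.height < s → Gp A p N (ee I p - i)

lemma cc_step [IsNoetherianRing R] {I A N m : Ideal R} {s i : ℕ}
    (hs : ∀ p : Ideal R, p.IsPrime → p.height < s → ¬ m ≤ p) (hC : CC I A N s i)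
    (a₀ : R) (ha₀ : a₀ ∈ A) :
    ∃ z ∈ A, z - a₀ ∈ m * A ∧ CC I A (N ⊔ Ideal.span {z}) s (i + 1) := by
  classical
  set J : ℕ → Ideal R := fun k => ⨆ (c : Fin k → R) (_ : ∀ l, c l ∈ A),
    (N ⊔ Ideal.span (Set.range c)).colon (A : Set R) with hJ
  have hJp : ∀ k (p : Ideal R), J k ≤ p ↔ ¬ Gp A p N k := by
    intro k p
    simp only [hJ, iSup_le_iff, Gp]
    push Not
    rfl
  set B : Set (Ideal R) := {p | p.IsPrime ∧ p.height < s ∧ ∃ k, ee I p - i = k + 1 ∧ ¬ Gp A p N k}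
    with hB
  have hfin : B.Finite := by
    have h1 : (⋃ k ∈ Set.Iio (s + 1), ((J k).minimalPrimes ∪ (I ⊔ J k).minimalPrimes)).Finite :=
      (Set.finite_Iio _).biUnion fun k _ =>
        ((J k).finite_minimalPrimes_of_isNoetherianRing R).union
          ((I ⊔ J k).finite_minimalPrimes_of_isNoetherianRing R)
    refine h1.subset ?_
    rintro p ⟨hp, hps, k, hk, hG⟩
    have hh := height_toNat p
    have hlt : p.height.toNat < s := by rw [← hh] at hps; exact_mod_cast hps
    have hqq : ∀ q : Ideal R, q.IsPrime → q < p → q.height < s ∧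
        q.height.toNat + 1 ≤ p.height.toNat := by
      intro q hq hqp
      have h2 := Ideal.height_add_one_le_of_lt_of_isPrime hqp
      rw [← hh, ← height_toNat q] at h2
      refine ⟨lt_of_le_of_lt (Ideal.height_mono hqp.le) hps, by exact_mod_cast h2⟩
    have hks : k < s + 1 := by
      unfold ee at hk
      split_ifs at hk <;> omega
    simp only [Set.mem_iUnion]
    refine ⟨k, hks, ?_⟩
    by_cases hIp : I ≤ p
    · right
      refine ⟨⟨hp, sup_le hIp ((hJp k p).2 hG)⟩, ?_⟩
      rintro q ⟨hq, hqJ⟩ hqp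
      by_contra hcon
      have hqp' : q < p := lt_of_le_not_ge hqp hcon
      obtain ⟨h3, h4⟩ := hqq q hq hqp'
      refine (hJp k q).1 (le_sup_right.trans hqJ) ((hC q hq h3).monoK ?_)
      have hIq : I ≤ q := le_sup_left.trans hqJ
      simp only [ee, if_pos hIp, if_pos hIq] at hk ⊢
      omega
    · left
      refine ⟨⟨hp, (hJp k p).2 hG⟩, ?_⟩
      rintro q ⟨hq, hqJ⟩ hqp
      by_contra hcon
      have hqp' : q < p := lt_of_le_not_ge hqp hcon
      obtain ⟨h3, h4⟩ := hqq q hq hqp'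
      refine (hJp k q).1 hqJ ((hC q hq h3).monoK ?_)
      have hIq : ¬ I ≤ q := fun h => hIp (h.trans hqp)
      simp only [ee, if_neg hIp, if_neg hIq] at hk ⊢
      omega
  obtain ⟨z, hzA, hza, hz⟩ := avoid (A := A) (N := N) (m := m) hfin.toFinset (by
    intro p hpB
    rw [Set.Finite.mem_toFinset] at hpB
    obtain ⟨hp, hps, k, hk, hG⟩ := hpB
    refine ⟨hp, hs p hp hps, ?_⟩
    by_contra hcon
    push Not at hcon
    have h1 : ¬ (N ⊔ p * A).colon (A : Set R) ≤ p := unif fun u hu hle => by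
      obtain ⟨t, ht, htm⟩ := hcon u hu
      exact ht (hle (mem_col.2 htm))
    obtain ⟨t, ht, htp⟩ := SetLike.not_le_iff_exists.1 h1
    obtain ⟨t', ht', h2⟩ := nak_prime A N p p le_rfl t htp (mem_colI.1 ht)
    exact hG ((gp_zero.2 fun hle => ht' (hle (mem_colI.2 h2))).monoK (Nat.zero_le k))) a₀ ha₀
  refine ⟨z, hzA, hza, fun p hp hps => ?_⟩
  rcases h : ee I p - i with _ | k
  · have := hC p hp hps
    rw [h] at this
    have h' : ee I p - (i + 1) = 0 := by omega
    rw [h']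
    exact this.monoN le_sup_left
  · have h' : ee I p - (i + 1) = k := by omega
    rw [h']
    by_cases hG : Gp A p N k
    · exact hG.monoN le_sup_left
    · have := hC p hp hps
      rw [h] at this
      exact this.exchange hzA (hz p (by rw [Set.Finite.mem_toFinset]; exact ⟨hp, hps, k, h, hG⟩))

lemma rDim_loc (p : Ideal R) [p.IsPrime] : rDim (Localization.AtPrime p) = (p.height : WithBot ℕ∞) :=
  IsLocalization.AtPrime.ringKrullDim_eq_height p _

lemma muE_le {M : Type v} [AddCommGroup M] [Module R M] {N : Submodule R M} {n : ℕ}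
    (h : muE N ≤ n) : ∃ S : Finset M, S.card ≤ n ∧ Submodule.span R (S : Set M) = N := by
  unfold muE at h
  set T := {n : ℕ∞ | ∃ s : Finset M, (s.card : ℕ∞) = n ∧ Submodule.span R (s : Set M) = N} with hT
  have hne : T.Nonempty := by
    rw [Set.nonempty_iff_ne_empty]
    intro h0
    rw [h0, sInf_empty] at h
    exact absurd h (by simp)
  obtain ⟨S, hS, hN⟩ := csInf_mem hne
  rw [← hS] at h
  exact ⟨S, by exact_mod_cast h, hN⟩

lemma cc_base [IsNoetherianRing R] {I A : Ideal R} {s : ℕ} (hAI : A ≤ I) (hG : Gcond I s)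
    (hs : ∀ p : Ideal R, p.IsPrime → p.height < s → ¬ A.colon (I : Set R) ≤ p) :
    CC I A ⊥ s 0 := by
  intro p hp hps
  obtain ⟨t', ht', htp'⟩ := SetLike.not_le_iff_exists.1 (hs p hp hps)
  rw [Nat.sub_zero]
  by_cases hIp : I ≤ p
  · have h1 := hG ⟨p, hp⟩ hIp (by
      dsimp only
      rw [rDim_loc]; exact_mod_cast hps)
    dsimp only at h1
    rw [rDim_loc, ← height_toNat p] at h1
    obtain ⟨S, hS, hSI⟩ := muE_le (n := p.height.toNat) (by exact_mod_cast h1)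
    have h2 : ∀ x : S, ∃ c ∈ I, ∃ w ∉ p, x.1 * algebraMap R (Localization.AtPrime p) w
        = algebraMap R (Localization.AtPrime p) c := by
      rintro ⟨x, hx⟩
      have : x ∈ Ideal.map (algebraMap R (Localization.AtPrime p)) I :=
        hSI ▸ Submodule.subset_span hx
      rw [IsLocalization.mem_map_algebraMap_iff p.primeCompl] at this
      obtain ⟨⟨c, w⟩, h⟩ := this
      exact ⟨c.1, c.2, w.1, w.2, h⟩
    choose c hcI w hwp hcw using h2
    simp only [ee, if_pos hIp]
    refine Gp.monoK hS ?_
    refine ⟨fun l => t' * c (S.equivFin.symm l), fun l => mem_colI.1 ht' _ (hcI _), ?_⟩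
    have h3 : ¬ (Ideal.span (Set.range c)).colon (I : Set R) ≤ p := by
      refine unif fun u hu hle => ?_
      have h4 : algebraMap R (Localization.AtPrime p) u ∈
          Ideal.map (algebraMap R (Localization.AtPrime p)) (Ideal.span (Set.range c)) := by
        have h5 := Ideal.mem_map_of_mem (algebraMap R (Localization.AtPrime p)) hu
        rw [← hSI] at h5
        refine (Submodule.span_le (p := Ideal.map (algebraMap R (Localization.AtPrime p))
          (Ideal.span (Set.range c)))).2 ?_ h5
        intro x hx
        have h6 := hcw ⟨x, hx⟩
        have h7 : algebraMap R (Localization.AtPrime p) (c ⟨x, hx⟩) ∈ 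
            Ideal.map (algebraMap R (Localization.AtPrime p)) (Ideal.span (Set.range c)) :=
          Ideal.mem_map_of_mem _ (Ideal.subset_span ⟨_, rfl⟩)
        rw [← h6] at h7
        have hu := IsLocalization.map_units (Localization.AtPrime p)
          (⟨w ⟨x, hx⟩, hwp _⟩ : p.primeCompl)
        exact (Ideal.mul_unit_mem_iff_mem _ hu).1 h7
      rw [IsLocalization.algebraMap_mem_map_algebraMap_iff p.primeCompl] at h4
      obtain ⟨t, ht, htu⟩ := h4
      exact ht (hle (mem_col.2 htu))
    obtain ⟨t, ht, htp⟩ := SetLike.not_le_iff_exists.1 h3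
    intro hle
    have : t' * t ∈ p := hle (mem_colI.2 fun y hy => by
      have h8 := mem_colI.1 ht y (hAI hy)
      rw [mul_assoc]
      apply Ideal.mem_sup_right
      have h9 : Ideal.span (Set.range c) ≤
          (Ideal.span (Set.range fun l => t' * c (S.equivFin.symm l))).colon {t'} := by
        refine Ideal.span_le.2 ?_
        rintro _ ⟨x, rfl⟩
        rw [SetLike.mem_coe, mem_col]
        exact Ideal.subset_span ⟨S.equivFin x, by simp [mul_comm]⟩
      rw [mul_comm]
      exact mem_col.1 (h9 h8))
    exact (hp.mem_or_mem this).elim htp' htp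
  · simp only [ee, if_neg hIp]
    refine Gp.monoK (k := 1) (by omega) ?_
    obtain ⟨x, hx, hxp⟩ := SetLike.not_le_iff_exists.1 hIp
    have hA : t' * x ∈ A := mem_colI.1 ht' x hx
    have hAp : t' * x ∉ p := fun h => (hp.mem_or_mem h).elim htp' hxp
    refine ⟨fun _ => t' * x, fun _ => hA, fun hle => hAp (hle (mem_colI.2 fun y _ => ?_))⟩
    exact Ideal.mul_mem_right _ _ (Ideal.mem_sup_right (Ideal.subset_span ⟨0, rfl⟩))

lemma cc_concl [IsNoetherianRing R] {I A N : Ideal R} {s i : ℕ} (hC : CC I A N s i)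
    (hs : ∀ p : Ideal R, p.IsPrime → p.height < s → ¬ A.colon (I : Set R) ≤ p)
    {p : Ideal R} (hp : p.IsPrime) (hps : p.height < s) (he : ee I p ≤ i) :
    ¬ N.colon (I : Set R) ≤ p := by
  have h := hC p hp hps
  rw [Nat.sub_eq_zero_of_le he, gp_zero] at h
  obtain ⟨t, ht, htp⟩ := SetLike.not_le_iff_exists.1 h
  obtain ⟨t', ht', htp'⟩ := SetLike.not_le_iff_exists.1 (hs p hp hps)
  intro hle
  have : t * t' ∈ p := hle (mem_colI.2 fun y hy => by
    rw [mul_assoc]; exact mem_colI.1 ht _ (mem_colI.1 ht' y hy))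
  exact (hp.mem_or_mem this).elim htp htp'

/-- A sequence in general position. -/
lemma exists_seq [IsNoetherianRing R] {I A m : Ideal R} {s : ℕ} (hAI : A ≤ I) (hG : Gcond I s)
    (hs : ∀ p : Ideal R, p.IsPrime → p.height < s → ¬ A.colon (I : Set R) ≤ p)
    (hm : A.colon (I : Set R) ≤ m) (a : ℕ → R) (ha : ∀ i, a i ∈ A) :
    ∃ (N : ℕ → Ideal R) (b : ℕ → R), N 0 = ⊥ ∧ (∀ i, N (i + 1) = N i ⊔ Ideal.span {b i}) ∧
      (∀ i, b i ∈ A) ∧ (∀ i, b i - a i ∈ m * A) ∧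
      ∀ i (p : Ideal R), p.IsPrime → p.height < s → ee I p ≤ i → ¬ (N i).colon (I : Set R) ≤ p := by
  have hs' : ∀ p : Ideal R, p.IsPrime → p.height < s → ¬ m ≤ p :=
    fun p hp hps hle => hs p hp hps (hm.trans hle)
  have step : ∀ (i : ℕ) (N : {N : Ideal R // CC I A N s i}), ∃ z ∈ A, z - a i ∈ m * A ∧
      CC I A (N.1 ⊔ Ideal.span {z}) s (i + 1) := fun i N => cc_step hs' N.2 (a i) (ha i)
  choose z hzA hza hzC using step
  let F : ∀ i : ℕ, {N : Ideal R // CC I A N s i} := fun i =>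
    Nat.rec (motive := fun i => {N : Ideal R // CC I A N s i}) ⟨⊥, cc_base hAI hG hs⟩
      (fun i N => ⟨N.1 ⊔ Ideal.span {z i N}, hzC i N⟩) i
  refine ⟨fun i => (F i).1, fun i => z i (F i), rfl, fun i => rfl, fun i => hzA _ _,
    fun i => hza _ _, fun i p hp hps he => cc_concl (F i).2 hs hp hps he⟩

end Part3

section Part4

variable {R : Type u} [CommRing R]

lemma dim_two (L p q q' : Ideal R) [hp : p.IsPrime] (hq : q.IsPrime) (hq' : q'.IsPrime)
    (hLq : L ≤ q) (h1 : q < q') (h2 : q' < p) :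
    (2 : WithBot ℕ∞) ≤ rDim (Localization.AtPrime p ⧸
      (Ideal.map (algebraMap R (Localization.AtPrime p)) L)) := by
  unfold rDim
  rw [ringKrullDim_quotient]
  set f := algebraMap R (Localization.AtPrime p) with hf
  have hd : ∀ x : Ideal R, x ≤ p → Disjoint (p.primeCompl : Set R) x := by
    intro x hx
    rw [Set.disjoint_left]
    exact fun a ha hax => ha (hx hax)
  have hpr : ∀ x : Ideal R, x.IsPrime → x ≤ p → (x.map f).IsPrime := fun x hx hxp =>
    IsLocalization.isPrime_of_isPrime_disjoint p.primeCompl _ x hx (hd x hxp)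
  have hlt : ∀ x y : Ideal R, x.IsPrime → y.IsPrime → y ≤ p → x < y → x.map f < y.map f := by
    intro x y hx hy hyp hxy
    refine lt_of_le_not_ge (Ideal.map_mono hxy.le) fun hle => ?_
    have := Ideal.comap_mono (f := f) hle
    have e1 : Ideal.comap f (Ideal.map f x) = x :=
      IsLocalization.comap_map_of_isPrime_disjoint p.primeCompl _ hx (hd x (hxy.le.trans hyp))
    have e2 : Ideal.comap f (Ideal.map f y) = y :=
      IsLocalization.comap_map_of_isPrime_disjoint p.primeCompl _ hy (hd y hyp)
    rw [e1, e2] at this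
    exact absurd hxy (not_lt_of_ge this)
  let Z := PrimeSpectrum.zeroLocus ((L.map f : Ideal (Localization.AtPrime p)) : Set (Localization.AtPrime p))
  let e : ∀ x : Ideal R, x.IsPrime → x ≤ p → L ≤ x → Z := fun x hx hxp hLx =>
    ⟨⟨x.map f, hpr x hx hxp⟩, Ideal.map_mono hLx⟩
  let S : LTSeries Z :=
    { length := 2
      toFun := ![e q hq (h1.le.trans h2.le) hLq, e q' hq' h2.le (hLq.trans h1.le),
        e p hp le_rfl (hLq.trans (h1.le.trans h2.le))]
      step := by
        intro i
        fin_cases i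
        · exact hlt q q' hq hq' h2.le h1
        · exact hlt q' p hq' hp le_rfl h2 }
  exact Order.LTSeries.length_le_krullDim S

lemma loc_key (L p q q' : Ideal R) (b y : R) [hp : p.IsPrime] (hq : q.IsPrime) (hq' : q'.IsPrime)
    (hLq : L ≤ q) (h1 : q < q') (h2 : q' < p) (hb : Rg L b) (hS2 : QuotS2 L)
    (hz : ∀ r ∈ p, r * y ∈ L ⊔ Ideal.span {b}) : ∃ t, t ∉ p ∧ t * y ∈ L ⊔ Ideal.span {b} := by
  have h3 := hS2 p hp (hLq.trans (h1.le.trans h2.le))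
  rw [min_eq_left (dim_two L p q q' hq hq' hLq h1 h2)] at h3
  obtain ⟨y₁, hy₁, hr₁, y₂, hy₂, hr₂, -⟩ := dp_of_depth (k := 2) (WithBot.coe_le_coe.1 h3)
  set f := algebraMap R (Localization.AtPrime p) with hf
  have hb' : Rg (L.map f) (f b) := by
    intro w hw
    obtain ⟨x, t, rfl⟩ := IsLocalization.exists_mk'_eq p.primeCompl w
    rw [IsLocalization.mul_mk'_eq_mk'_of_mul, 
      IsLocalization.mk'_mem_map_algebraMap_iff p.primeCompl] at hw
    obtain ⟨c, hc, hcm⟩ := hw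
    rw [IsLocalization.mk'_mem_map_algebraMap_iff p.primeCompl]
    exact ⟨c, hc, hb _ (by convert hcm using 1; ring)⟩
  have e : L.map f ⊔ Ideal.span {f b} = (L ⊔ Ideal.span {b}).map f := by
    rw [Ideal.map_sup, Ideal.map_span, Set.image_singleton]
  have hz' : ∀ r ∈ maximalIdeal (Localization.AtPrime p), r * f y ∈ L.map f ⊔ Ideal.span {f b} := by
    intro r hr
    obtain ⟨x, t, rfl⟩ := IsLocalization.exists_mk'_eq p.primeCompl r
    rw [IsLocalization.AtPrime.mk'_mem_maximal_iff _ p] at hr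
    rw [e, mul_comm, IsLocalization.mul_mk'_eq_mk'_of_mul,
      IsLocalization.mk'_mem_map_algebraMap_iff p.primeCompl]
    exact ⟨1, Submonoid.one_mem _, by rw [one_mul, mul_comm]; exact hz x hr⟩
  have := sym_lemma hb' hr₁ hr₂ hy₁ hy₂ hz'
  rw [e, IsLocalization.algebraMap_mem_map_algebraMap_iff p.primeCompl] at this
  obtain ⟨t, ht, htm⟩ := this
  exact ⟨t, ht, htm⟩

lemma le_ht {J : Ideal R} {k : ℕ} :
    (k : WithBot ℕ∞) ≤ ht J ↔ ∀ p : Ideal R, p.IsPrime → J ≤ p → (k : ℕ∞) ≤ p.height := by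
  unfold ht
  simp only [le_iInf_iff, rDim_loc]
  constructor
  · intro h p hp hJ
    have := h ⟨p, hp⟩ hJ
    exact_mod_cast this
  · intro h p hJ
    have := h p.asIdeal p.2 hJ
    exact_mod_cast this

lemma ht_le {J p : Ideal R} [hp : p.IsPrime] (h : J ≤ p) : ht J ≤ (p.height : WithBot ℕ∞) := by
  unfold ht
  refine (iInf₂_le (⟨p, hp⟩ : PrimeSpectrum R) h).trans ?_
  rw [rDim_loc]

/-- The hypotheses on a sequence in general position. -/
structure Sq (I A : Ideal R) (s : ℕ) (N : ℕ → Ideal R) (b : ℕ → R) : Prop where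
  z : N 0 = ⊥
  st : ∀ i, N (i + 1) = N i ⊔ Ideal.span {b i}
  bA : ∀ i, b i ∈ A
  D : ∀ i (p : Ideal R), p.IsPrime → p.height < s → ee I p ≤ i → ¬ (N i).colon (I : Set R) ≤ p

variable {I A : Ideal R} {s : ℕ} {N : ℕ → Ideal R} {b : ℕ → R}

lemma Sq.leA (h : Sq I A s N b) (i : ℕ) : N i ≤ A := by
  induction i with
  | zero => rw [h.z]; exact bot_le
  | succ i ih =>
    rw [h.st, sup_le_iff, Ideal.span_singleton_le_iff_mem]
    exact ⟨ih, h.bA i⟩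

lemma Sq.span (h : Sq I A s N b) (i : ℕ) : N i = Ideal.span (b '' (Set.Iio i)) := by
  induction i with
  | zero => rw [h.z]; simp
  | succ i ih =>
    have : Set.Iio (i + 1) = Set.Iio i ∪ {i} := by
      ext j
      simp only [Set.mem_Iio, Set.mem_union, Set.mem_singleton_iff]
      omega
    rw [h.st, ih, this, Set.image_union, Ideal.span_union, Set.image_singleton]

def PP (I : Ideal R) (N : ℕ → Ideal R) (i : ℕ) : Prop :=
  ∀ y ∈ I, ((N i).colon {y}).IsPrime → ((N i).colon {y}).height ≤ i

lemma ee_le (I p : Ideal R) : ee I p ≤ p.height.toNat + 1 := by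
  unfold ee; split_ifs <;> omega

variable [IsNoetherianRing R]

lemma toNat_le {p : Ideal R} [p.IsPrime] {i : ℕ} : p.height.toNat ≤ i ↔ p.height ≤ i := by
  rw [← height_toNat p]; simp

/-- If `N (i+1) ≤ p`, height `≤ i < s`, then `I ≤ p`. -/
lemma Sq.mem1 (h : Sq I A s N b) {i : ℕ} (hi : i < s) {p : Ideal R} (hp : p.IsPrime)
    (hpi : p.height ≤ i) (hN : N (i + 1) ≤ p) : I ≤ p := by
  by_contra hI
  have h1 := h.D (i + 1) p hp (lt_of_le_of_lt hpi (by exact_mod_cast hi))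
    ((ee_le I p).trans (by have := toNat_le.2 hpi; omega))
  obtain ⟨t, ht, htp⟩ := SetLike.not_le_iff_exists.1 h1
  obtain ⟨x, hx, hxp⟩ := SetLike.not_le_iff_exists.1 hI
  exact (hp.mem_or_mem (hN (mem_colI.1 ht x hx))).elim htp hxp

lemma Sq.mem2 (h : Sq I A s N b) {i : ℕ} (hi : i < s) {p : Ideal R} (hp : p.IsPrime)
    (hpi : p.height ≤ i) (hI : I ≤ p) : ¬ (N i).colon (I : Set R) ≤ p := by
  refine h.D i p hp (lt_of_le_of_lt hpi (by exact_mod_cast hi)) ?_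
  unfold ee
  rw [if_pos hI]
  exact toNat_le.2 hpi

lemma Sq.consA (h : Sq I A s N b) {i : ℕ} (hi : i < s) (hP : PP I N i) {z : R} (hz : z ∈ I)
    (hzK : z ∈ (N i).colon (I : Set R)) : z ∈ N i := by
  by_contra hzN
  obtain ⟨t, hpr, hle⟩ := exists_as _ z hzN
  have hpi := hP _ (I.mul_mem_left t hz) hpr
  refine h.mem2 hi hpr hpi (fun x hx => mem_col.2 ?_) (fun x hx => mem_col.2 ?_)
  · have := (N i).mul_mem_left t (mem_colI.1 hzK x hx)
    convert this using 1; ring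
  · exact mem_colI.1 hx _ (I.mul_mem_left t hz)

lemma Sq.consB (h : Sq I A s N b) {i : ℕ} (hi : i < s) (hP : PP I N i) {x : R}
    (hx : x * b i ∈ N i) : x ∈ (N i).colon (I : Set R) := by
  refine mem_colI.2 fun y hy => ?_
  by_contra hzN
  obtain ⟨t, hpr, hle⟩ := exists_as _ _ hzN
  have hyI : t * (x * y) ∈ I := I.mul_mem_left t (I.mul_mem_left x hy)
  have hpi := hP _ hyI hpr
  refine h.mem2 hi hpr hpi (h.mem1 hi hpr hpi ?_) (fun x hx => mem_col.2 (mem_colI.1 hx _ hyI))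
  rw [h.st, sup_le_iff, Ideal.span_singleton_le_iff_mem, mem_col]
  refine ⟨fun r hr => mem_col.2 ((N i).mul_mem_right _ hr), ?_⟩
  have := (N i).mul_mem_left (t * y) hx
  convert this using 1; ring

variable [IsLocalRing R]

lemma Sq.good (h : Sq I A s N b) (hCM : IsCMLocalRing R) (hA : A ≤ maximalIdeal R) (i : ℕ)
    (hi : i ≤ s) (hI : (i : WithBot ℕ∞) ≤ ht I) : Good i (N i) := by
  induction i with
  | zero => rw [h.z]; exact good_bot hCM
  | succ i ih =>
    have hI' := le_ht.1 hI
    have h1 := ih (by omega) (le_ht.2 fun p hp hIp =>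
      le_trans (by exact_mod_cast Nat.le_succ i) (hI' p hp hIp))
    rw [h.st]
    refine good_step h1 ((h.leA i).trans hA) (hA (h.bA i)) (rg_of_not_as fun p hp hbp => ?_)
    have hpi := good_as h1 hp
    have hIp := h.mem1 (by omega : i < s) hp.1 hpi.le (by
      rw [h.st, sup_le_iff, Ideal.span_singleton_le_iff_mem]
      exact ⟨hp.le, hbp⟩)
    have := hI' p hp.1 hIp
    rw [hpi] at this
    have : i + 1 ≤ i := by exact_mod_cast this
    omega

lemma Sq.step (h : Sq I A s N b) (hCM : IsCMLocalRing R) (hAI : A ≤ I)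
    (hS2 : WeaklyResS2 I (s - 2)) (hK : A.colon (I : Set R) ≠ ⊤) {i : ℕ} (hi : i + 2 ≤ s)
    (hI : ht I ≤ (i : WithBot ℕ∞)) (hP : PP I N i) : PP I N (i + 1) := by
  classical
  intro y hy hpr
  set p := (N (i + 1)).colon {y} with hp
  set L := (N i).colon (I : Set R) with hL
  have hNL : N i ≤ L := fun r hr => mem_colI.2 fun y _ => (N i).mul_mem_right _ hr
  have hgeo : IsGeometricRI I L i := by
    refine ⟨⟨?_, hI, ?_, N i, (h.leA i).trans hAI, ⟨(Finset.range i).image b, ?_, ?_⟩, hL⟩, ?_⟩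
    · intro hc
      apply hK
      rw [eq_top_iff, ← hc]
      exact colon_mono' (h.leA i) _
    · refine le_ht.2 fun p hp hLp => ?_
      by_contra hcon
      push Not at hcon
      refine h.D i p hp (hcon.trans_le (by exact_mod_cast (by omega : i ≤ s))) ?_ hLp
      have := ee_le I p
      rw [← height_toNat p] at hcon
      have : p.height.toNat < i := by exact_mod_cast hcon
      omega
    · exact Finset.card_image_le.trans (by simp)
    · rw [h.span i, Finset.coe_image, Finset.coe_range]
    · have : ((i + 1 : ℕ) : WithBot ℕ∞) ≤ ht (I ⊔ L) := by
        refine le_ht.2 fun p hp hLp => ?_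
        by_contra hcon
        have h2 : p.height ≤ i := by
          push Not at hcon
          rw [← height_toNat p] at hcon ⊢
          have h3 : p.height.toNat < i + 1 := by exact_mod_cast hcon
          exact_mod_cast Nat.le_of_lt_succ h3
        exact h.mem2 (by omega : i < s) hp h2 (le_sup_left.trans hLp) (le_sup_right.trans hLp)
      exact_mod_cast this
  have hS := hS2 i (by omega) L hgeo
  have hbI : ∀ i, b i ∈ I := fun i => hAI (h.bA i)
  have hbL : Rg L (b i) := by
    intro x hx
    refine h.consB (by omega) hP ?_
    rw [mul_comm]
    exact h.consA (by omega) hP (I.mul_mem_right _ (hbI i)) hx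
  have hint : ∀ z ∈ I, z ∈ L ⊔ Ideal.span {b i} → z ∈ N (i + 1) := by
    intro z hz hzL
    obtain ⟨u, hu⟩ := mem_sup_sp.1 hzL
    rw [h.st, mem_sup_sp]
    exact ⟨u, h.consA (by omega) hP (I.sub_mem hz (I.mul_mem_right _ (hbI i))) hu⟩
  have hLp : L ≤ p := fun r hr => mem_col.2 (by
    rw [h.st]; exact Ideal.mem_sup_left (mem_colI.1 hr y hy))
  obtain ⟨q, hq, hqp⟩ := Ideal.exists_minimalPrimes_le hLp
  have hqL := hq.1.2
  have hqpr := hq.1.1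
  have hqh : q.height ≤ i := by
    obtain ⟨-, w, hw⟩ := as_of_minimal hq
    by_cases hex : ∃ u ∈ I, (N i).colon {w * u} ≤ q
    · obtain ⟨u, hu, hle⟩ := hex
      have e : q = (N i).colon {w * u} := by
        refine le_antisymm (fun r hr => mem_col.2 ?_) hle
        rw [hw, mem_col] at hr
        have := mem_colI.1 hr u hu
        rwa [mul_assoc] at this
      rw [e]
      exact hP _ (I.mul_mem_left _ hu) (e ▸ hqpr)
    · exfalso
      push Not at hex
      refine unif (A := I) (M := (N i).colon {w}) (p := q) (fun u hu hle => hex u hu ?_) ?_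
      · refine le_trans (fun r hr => ?_) hle
        rw [mem_col] at hr ⊢
        rw [mem_col]
        convert hr using 1; ring
      · intro r hr
        rw [hw, mem_col]
        refine mem_colI.2 fun u hu => ?_
        have := mem_col.1 (mem_colI.1 hr u hu)
        convert this using 1; ring
  by_contra hcon
  have hpi : ((i + 1 : ℕ) : ℕ∞) < p.height := by push Not at hcon; exact hcon
  have hlt : q < p := lt_of_le_of_ne hqp (by
    intro hqe
    rw [← hqe] at hpi
    have := hpi.trans_le hqh
    have : i + 1 < i := by exact_mod_cast this
    omega)
  have hbet : ∃ q' : Ideal R, q'.IsPrime ∧ q < q' ∧ q' < p := by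
    by_contra hno
    push Not at hno
    have := cat_lemma hCM q p hlt (fun q' hq' h1 h2 => by
      by_contra hne
      exact hno q' hq' h1 (lt_of_le_of_ne h2 hne))
    refine absurd hpi (not_lt.2 (this.trans ?_))
    push_cast
    gcongr
  obtain ⟨q', hq', h1, h2⟩ := hbet
  obtain ⟨t, htp, ht⟩ := loc_key L p q q' (b i) y hqpr hq' hqL h1 h2 hbL hS (fun r hr => by
    have := mem_col.1 hr
    rw [h.st] at this
    exact sup_le_sup_right hNL _ this)
  exact htp (mem_col.2 (hint _ (I.mul_mem_left _ hy) ht))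

lemma Sq.all (h : Sq I A s N b) (hCM : IsCMLocalRing R) (hAI : A ≤ I) (hA : A ≤ maximalIdeal R)
    (hS2 : WeaklyResS2 I (s - 2)) (hK : A.colon (I : Set R) ≠ ⊤) (i : ℕ) (hi : i < s) :
    PP I N i := by
  have hgood : ∀ i ≤ s, (i : WithBot ℕ∞) ≤ ht I → PP I N i := fun i hi hI y _ hpr =>
    (good_as (h.good hCM hA i hi hI) ⟨hpr, y, rfl⟩).le
  induction i with
  | zero => exact hgood 0 (by omega) (le_ht.2 (by simp))
  | succ i ih =>
    by_cases hI : ((i + 1 : ℕ) : WithBot ℕ∞) ≤ ht I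
    · exact hgood _ hi.le hI
    · refine h.step hCM hAI hS2 hK (by omega) ?_ (ih (by omega))
      rw [le_ht] at hI
      push Not at hI
      obtain ⟨p, hp, hIp, hlt⟩ := hI
      refine (ht_le hIp).trans ?_
      have : p.height ≤ i := by
        rw [← height_toNat p] at hlt ⊢
        have h3 : p.height.toNat < i + 1 := by exact_mod_cast hlt
        exact_mod_cast Nat.le_of_lt_succ h3
      exact_mod_cast this

lemma Sq.final {s : ℕ} (h : Sq I A (s + 1) N b) (hCM : IsCMLocalRing R) (hAI : A ≤ I)
    (hA : A ≤ maximalIdeal R)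
    (hS2 : WeaklyResS2 I (s + 1 - 2)) (hK : A.colon (I : Set R) ≠ ⊤) {x : R}
    (hx : x * b s ∈ N s) : x ∈ A.colon (I : Set R) :=
  colon_mono' (h.leA s) _ (h.consB (by omega) (h.all hCM hAI hA hS2 hK s (by omega)) hx)

end Part4

section Part5

variable {R : Type u} [CommRing R]

lemma mem_mul_span {n : ℕ} {J : Ideal R} {f : Fin n → R} {x : R}
    (hx : x ∈ J * Ideal.span (Set.range f)) :
    ∃ ν : Fin n → R, (∀ l, ν l ∈ J) ∧ ∑ l, ν l * f l = x := by
  rw [← smul_eq_mul] at hx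
  obtain ⟨a, ha, h⟩ := (Submodule.mem_ideal_smul_span_iff_exists_sum J f x).1 hx
  refine ⟨a, ha, ?_⟩
  rw [Finsupp.sum_fintype _ _ (by simp)] at h
  simpa using h

variable [IsNoetherianRing R] [IsLocalRing R] {I A : Ideal R}

lemma nak {N B : Ideal R} (h : B ≤ N ⊔ maximalIdeal R * B) : B ≤ N :=
  Submodule.le_of_le_smul_of_le_jacobson_bot ((inferInstance : IsNoetherianRing R).noetherian B)
    (IsLocalRing.maximalIdeal_le_jacobson ⊥) h

lemma last_mem {s : ℕ} (hCM : IsCMLocalRing R) (hAI : A ≤ I) (hG : Gcond I (s + 1))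
    (hS2 : WeaklyResS2 I (s + 1 - 2)) (hK : A.colon (I : Set R) ≠ ⊤)
    (hs : ∀ p : Ideal R, p.IsPrime → p.height < (s + 1 : ℕ) → ¬ A.colon (I : Set R) ≤ p)
    (a : Fin (s + 1) → R) (haA : Ideal.span (Set.range a) = A) (J : Ideal R)
    (c : Fin (s + 1) → R) (hc : ∑ k, c k * a k = 0) (hJ : ∀ k, c k ∈ J) :
    c (Fin.last s) ∈ A.colon (I : Set R) ⊔ maximalIdeal R * J := by
  have hKm := le_maximalIdeal hK
  have hAK : A ≤ A.colon (I : Set R) := fun r hr => mem_colI.2 fun y _ => A.mul_mem_right _ hr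
  have haa : ∀ k, a k ∈ A := fun k => haA ▸ Ideal.subset_span ⟨k, rfl⟩
  obtain ⟨N, b, hz, hst, hbA, hba, hD⟩ := exists_seq hAI hG hs hKm
    (fun i => if h : i < s + 1 then a ⟨i, h⟩ else 0) (by
      intro i
      split_ifs
      · exact haa _
      · exact A.zero_mem)
  have hq : Sq I A (s + 1) N b := ⟨hz, hst, hbA, hD⟩
  have hba' : ∀ k : Fin (s + 1), a k - b k ∈ maximalIdeal R * A := by
    intro k
    have := hba k
    rw [dif_pos k.2] at this
    have := Ideal.neg_mem_iff _ |>.2 this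
    rwa [neg_sub] at this
  have hNs : N (s + 1) = Ideal.span (Set.range fun k : Fin (s + 1) => b k) := by
    rw [hq.span]
    congr 1
    ext x
    constructor
    · rintro ⟨k, hk, rfl⟩
      exact ⟨⟨k, hk⟩, rfl⟩
    · rintro ⟨k, rfl⟩
      exact ⟨k, k.2, rfl⟩
  have hAN : A = Ideal.span (Set.range fun k : Fin (s + 1) => b k) := by
    rw [← hNs]
    refine le_antisymm (nak ?_) (hq.leA _)
    conv_lhs => rw [← haA]
    rw [Ideal.span_le]
    rintro _ ⟨k, rfl⟩
    have e : a k = b k + (a k - b k) := by ring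
    rw [e]
    refine Submodule.add_mem_sup ?_ (hba' k)
    rw [hNs]
    exact Ideal.subset_span ⟨k, rfl⟩
  have h1 : ∀ k : Fin (s + 1), ∃ ν : Fin (s + 1) → R, (∀ l, ν l ∈ maximalIdeal R) ∧
      ∑ l, ν l * b l = a k - b k := fun k => mem_mul_span (hAN ▸ hba' k)
  choose ν hνm hν using h1
  set d : Fin (s + 1) → R := fun l => ∑ k, c k * ν k l with hd
  have h2 : ∑ l, (c l + d l) * b l = 0 := by
    have e1 : ∑ l, d l * b l = ∑ k, c k * (a k - b k) := by
      simp only [hd, Finset.sum_mul]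
      rw [Finset.sum_comm]
      refine Finset.sum_congr rfl fun k _ => ?_
      rw [← hν k, Finset.mul_sum]
      exact Finset.sum_congr rfl fun l _ => by ring
    simp only [add_mul, Finset.sum_add_distrib, e1]
    rw [← Finset.sum_add_distrib, ← hc]
    exact Finset.sum_congr rfl fun l _ => by ring
  have h3 : (c (Fin.last s) + d (Fin.last s)) * b s ∈ N s := by
    rw [Fin.sum_univ_castSucc] at h2
    have e : (c (Fin.last s) + d (Fin.last s)) * b s
        = - ∑ l : Fin s, (c l.castSucc + d l.castSucc) * b l := by
      rw [eq_neg_iff_add_eq_zero, add_comm]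
      simpa using h2
    rw [e]
    refine (N s).neg_mem (Ideal.sum_mem _ fun l _ => (N s).mul_mem_left _ ?_)
    rw [hq.span]
    exact Ideal.subset_span ⟨l, l.2, rfl⟩
  have h4 := hq.final hCM hAI (hAK.trans hKm) hS2 hK h3
  have h5 : d (Fin.last s) ∈ maximalIdeal R * J :=
    Ideal.sum_mem _ fun k _ => by
      rw [mul_comm (c k)]; exact Ideal.mul_mem_mul (hνm _ _) (hJ _)
  have e : c (Fin.last s) = (c (Fin.last s) + d (Fin.last s)) + (- d (Fin.last s)) := by ring
  rw [e]
  exact Submodule.add_mem_sup h4 (neg_mem h5)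

lemma coef_mem {s : ℕ} (hCM : IsCMLocalRing R) (hAI : A ≤ I) (hG : Gcond I s)
    (hS2 : WeaklyResS2 I (s - 2)) (hK : A.colon (I : Set R) ≠ ⊤)
    (hs : ∀ p : Ideal R, p.IsPrime → p.height < s → ¬ A.colon (I : Set R) ≤ p)
    (a : Fin s → R) (haA : Ideal.span (Set.range a) = A)
    (c : Fin s → R) (hc : ∑ k, c k * a k = 0) (j : Fin s) : c j ∈ A.colon (I : Set R) := by
  cases s with
  | zero => exact j.elim0
  | succ s =>
    set J : Ideal R := Ideal.span {x | ∃ c : Fin (s + 1) → R, ∑ k, c k * a k = 0 ∧ ∃ j, c j = x}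
      with hJ
    have hmem : ∀ c : Fin (s + 1) → R, ∑ k, c k * a k = 0 → ∀ j, c j ∈ J :=
      fun c hc j => Ideal.subset_span ⟨c, hc, j, rfl⟩
    have : J ≤ A.colon (I : Set R) := by
      apply nak
      rw [hJ, Ideal.span_le, ← hJ]
      rintro _ ⟨c, hc, j, rfl⟩
      have := last_mem hCM hAI hG hS2 hK hs (a ∘ Equiv.swap j (Fin.last s))
        (by rw [EquivLike.range_comp]; exact haA) J (c ∘ Equiv.swap j (Fin.last s))
        (by
          rw [← hc]
          exact Equiv.sum_comp (Equiv.swap j (Fin.last s)) fun k => c k * a k)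
        (fun k => hmem c hc _)
      simpa using this
    exact this (hmem c hc j)

lemma exists_fam {s : ℕ} (h : muE A ≤ (s : ℕ∞)) :
    ∃ a : Fin s → R, Ideal.span (Set.range a) = A := by
  obtain ⟨S, hS, hA⟩ := muE_le h
  refine ⟨fun l => if h : l.1 < S.card then (S.equivFin.symm ⟨l, h⟩ : R) else 0, ?_⟩
  refine le_antisymm (Ideal.span_le.2 ?_) ?_
  · rintro _ ⟨l, rfl⟩
    dsimp only
    split_ifs
    · rw [← hA]
      exact Submodule.subset_span (Subtype.mem _)
    · exact A.zero_mem
  · conv_lhs => rw [← hA]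
    refine Submodule.span_le.2 fun x hx => Ideal.subset_span ?_
    have hl := (S.equivFin ⟨x, hx⟩).2
    refine ⟨⟨S.equivFin ⟨x, hx⟩, hl.trans_le hS⟩, ?_⟩
    dsimp only
    rw [dif_pos hl]
    simp

end Part5

/-- Lemma 2.5: if `I` satisfies `G_s` and is weakly `(s-2)`-residually `S₂`, and
`K = 𝔞 : I` is an `s`-residual intersection of `I` with `𝔞 ⊆ I`, `μ(𝔞) ≤ s`, then
`𝔞 / K𝔞` is a free `R/K`-module of rank `s`. -/
theorem statement4 {R : Type u} [CommRing R] [IsNoetherianRing R] [IsLocalRing R]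
    (hCM : IsCMLocalRing R)
    (I : Ideal R) (s : ℕ) (hG : Gcond I s) (hS2 : WeaklyResS2 I (s - 2))
    (a K : Ideal R) (ha : a ≤ I) (hmu : muE a ≤ (s : ℕ∞))
    (hK : K = Submodule.colon a I) (hRI : IsResidualIntersection I K s) :
    Nonempty ((↥a ⧸ (K • (⊤ : Submodule R ↥a))) ≃ₗ[R] (Fin s → R ⧸ K)) := by
  obtain ⟨hKt, -, hht, -⟩ := hRI
  have hs : ∀ p : Ideal R, p.IsPrime → p.height < s → ¬ K ≤ p := fun p hp hlt hle =>
    absurd (le_ht.1 hht p hp hle) (not_le.2 hlt)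
  obtain ⟨f, hf⟩ := exists_fam hmu
  have hfa : ∀ k, f k ∈ a := fun k => hf ▸ Ideal.subset_span ⟨k, rfl⟩
  have hcoef : ∀ c : Fin s → R, ∑ k, c k * f k = 0 → ∀ j, c j ∈ K := by
    subst hK
    exact coef_mem hCM ha hG hS2 hKt hs f hf
  let φ : (Fin s → R) →ₗ[R] ↥a := Fintype.linearCombination R fun k => (⟨f k, hfa k⟩ : ↥a)
  have hφ : ∀ r, ((φ r : ↥a) : R) = ∑ k, r k * f k := by
    intro r
    simp [φ, Fintype.linearCombination_apply]
  let g1 : (Fin s → R) →ₗ[R] (↥a ⧸ (K • (⊤ : Submodule R ↥a))) := (Submodule.mkQ _) ∘ₗ φ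
  let g2 : (Fin s → R) →ₗ[R] (Fin s → R ⧸ K) :=
    LinearMap.pi fun k => (Submodule.mkQ K) ∘ₗ (LinearMap.proj k)
  have s1 : Function.Surjective g1 := by
    refine (Submodule.mkQ_surjective _).comp ?_
    rintro ⟨x, hx⟩
    rw [← hf] at hx
    obtain ⟨c, hc⟩ := (Ideal.mem_span_range_iff_exists_fun).1 hx
    exact ⟨c, Subtype.ext (by rw [hφ]; exact hc)⟩
  have s2 : Function.Surjective g2 := by
    intro y
    choose r hr using fun k => Submodule.mkQ_surjective K (y k)
    exact ⟨r, funext hr⟩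
  have k2 : ∀ r, r ∈ LinearMap.ker g2 ↔ ∀ k, r k ∈ K := by
    intro r
    rw [LinearMap.mem_ker, funext_iff]
    refine forall_congr' fun k => ?_
    exact Submodule.Quotient.mk_eq_zero K
  have k1 : ∀ r, r ∈ LinearMap.ker g1 ↔ ∀ k, r k ∈ K := by
    intro r
    rw [LinearMap.mem_ker]
    have e : g1 r = 0 ↔ φ r ∈ K • (⊤ : Submodule R ↥a) := Submodule.Quotient.mk_eq_zero _
    rw [e, Submodule.mem_smul_top_iff, hφ, smul_eq_mul]
    constructor
    · intro h k
      rw [← hf] at h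
      obtain ⟨ν, hν, h2⟩ := mem_mul_span h
      have := hcoef (fun k => r k - ν k) (by
        simp only [sub_mul, Finset.sum_sub_distrib, h2, sub_self]) k
      have h3 := K.add_mem this (hν k)
      simpa using h3
    · intro h
      exact Ideal.sum_mem _ fun k _ => Ideal.mul_mem_mul (h k) (hfa k)
  have hker : LinearMap.ker g1 = LinearMap.ker g2 := by
    ext r
    rw [k1, k2]
  exact ⟨(g1.quotKerEquivOfSurjective s1).symm ≪≫ₗ
    (Submodule.quotEquivOfEq _ _ hker) ≪≫ₗ (g2.quotKerEquivOfSurjective s2)⟩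

end CPU
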